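/- arXiv:1511.03108 — 2 statements merged into one kernel-verified Lean document; each statement's English description precedes it below -/
import Mathlib

section
/- Let m, l, T be natural numbers, let S be the (m+l)×(m+l) complex shift matrix with entries S_{p,q} = 1 if q = p + l and 0 otherwise, and let ρ > 0 be a real number. Let Y₁, Y₂ be (m+l)×T complex matrices, let Ȳ₂ consist of the first m rows of Y₂ and Ȳ₁ consist of the last m rows of Y₁ (rows l,…,m+l−1). Then for any T×T complex matrices G and G': Re(Tr(G·Y₂ᴴ·(ρ·S)·Y₁)) ≤ Re(Tr(G'·Y₂ᴴ·(ρ·S)·Y₁)) if and only if Re(Tr(G·Ȳ₂ᴴ·Ȳ₁)) ≤ Re(Tr(G'·Ȳ₂ᴴ·Ȳ₁)). Hence, when the correlation matrix C = ρ·S has a single superdiagonal, the proposed decoding criterion argmax_G Re(Tr(G·Y₂ᴴ·C·Y₁)) selects the same matrices as the conventional differential decoder argmax_G Re(Tr(G·Ȳ₂ᴴ·Ȳ₁)) applied to the reduced received matrices with m = N_R − l rows. (Theorem 3.) -/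
open Matrix Complex

theorem shifted_decoding_equiv
    (m l T : ℕ) (ρ : ℝ) (hρ : 0 < ρ)
    (S : Matrix (Fin (m + l)) (Fin (m + l)) ℂ)
    (hS : ∀ p q : Fin (m + l), S p q = if (q : ℕ) = (p : ℕ) + l then 1 else 0)
    (Y₁ Y₂ : Matrix (Fin (m + l)) (Fin T) ℂ)
    (G G' : Matrix (Fin T) (Fin T) ℂ) :
    ((G * Y₂ᴴ * ((ρ : ℂ) • S) * Y₁).trace).re ≤
        ((G' * Y₂ᴴ * ((ρ : ℂ) • S) * Y₁).trace).re ↔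
      ((G * (Y₂.submatrix (Fin.castAdd l) id)ᴴ
          * (Y₁.submatrix (fun i : Fin m => i.addNat l) id)).trace).re ≤
        ((G' * (Y₂.submatrix (Fin.castAdd l) id)ᴴ
          * (Y₁.submatrix (fun i : Fin m => i.addNat l) id)).trace).re := by
  have h1 : ∀ (i : Fin m) (t : Fin T), (S * Y₁) (Fin.castAdd l i) t = Y₁ (i.addNat l) t := by
    intro i t
    rw [Matrix.mul_apply, Finset.sum_eq_single (i.addNat l)]
    · rw [hS]; simp
    · intro b _ hb
      rw [hS, if_neg, zero_mul]
      intro h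
      apply hb
      ext
      simpa using h
    · intro h
      exact absurd (Finset.mem_univ _) h
  have h2 : ∀ (j : Fin l) (t : Fin T), (S * Y₁) (Fin.natAdd m j) t = 0 := by
    intro j t
    rw [Matrix.mul_apply]
    apply Finset.sum_eq_zero
    intro b _
    rw [hS, if_neg, zero_mul]
    have := b.isLt
    simp only [Fin.val_natAdd]
    omega
  have key : Y₂ᴴ * (S * Y₁) = (Y₂.submatrix (Fin.castAdd l) id)ᴴ
      * (Y₁.submatrix (fun i : Fin m => i.addNat l) id) := by
    ext s t
    rw [Matrix.mul_apply, Fin.sum_univ_add, Matrix.mul_apply]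
    simp [h1, h2]
  have main : ∀ H : Matrix (Fin T) (Fin T) ℂ, ((H * Y₂ᴴ * ((ρ : ℂ) • S) * Y₁).trace).re
      = ρ * ((H * (Y₂.submatrix (Fin.castAdd l) id)ᴴ
          * (Y₁.submatrix (fun i : Fin m => i.addNat l) id)).trace).re := by
    intro H
    rw [Matrix.mul_assoc H (Y₂.submatrix (Fin.castAdd l) id)ᴴ, ← key, Matrix.mul_smul,
      Matrix.smul_mul, Matrix.trace_smul, smul_eq_mul, Complex.re_ofReal_mul]
    simp only [Matrix.mul_assoc]
  rw [main G, main G']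
  exact mul_le_mul_iff_right₀ hρ
end

section
/- Let l be a natural number and let a, b, c be real numbers with a ≥ 0, b ≥ 0, a + b ≤ 1, and c > 0. Define f(n) = ((n − l)·a + (n − l − 1)·b) / (n·(1 + c) − (n − l)·a − (n − l − 1)·b) for real n. Then the denominator of f is strictly positive for all n ≥ l + 1, and f is monotone nondecreasing on the interval [l + 1, ∞). (Observation (a) after Theorem 2: with a = |ρ_l|², b = |ρ_{l+1}|², c = σ²/(N_T P), the equivalent SINR γ of eq. (48) is nondecreasing in the number of receive antennas N_R = n.) -/
theorem sinr_nondecreasing_in_antennas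
    (l : ℕ) (a b c : ℝ) (ha : 0 ≤ a) (hb : 0 ≤ b) (hab : a + b ≤ 1) (hc : 0 < c) :
    (∀ n : ℝ, (l : ℝ) + 1 ≤ n →
      0 < n * (1 + c) - (n - l) * a - (n - l - 1) * b) ∧
    MonotoneOn (fun n : ℝ =>
        ((n - l) * a + (n - l - 1) * b) / (n * (1 + c) - (n - l) * a - (n - l - 1) * b))
      (Set.Ici ((l : ℝ) + 1)) := by
  have hl : (0 : ℝ) ≤ l := Nat.cast_nonneg l
  have ht : 0 ≤ (l : ℝ) * a + (l + 1) * b := by positivity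
  have hpos : ∀ n : ℝ, (l : ℝ) + 1 ≤ n →
      0 < n * (1 + c) - (n - l) * a - (n - l - 1) * b := by
    intro n hn
    have hn0 : 0 < n := by linarith
    have h1 : 0 ≤ n * (1 - a - b) := mul_nonneg hn0.le (by linarith)
    have h2 : 0 < n * c := mul_pos hn0 hc
    linarith
  refine ⟨hpos, ?_⟩
  intro x hx y hy hxy
  have hk : 0 ≤ (1 + c) * ((l : ℝ) * a + (l + 1) * b) * (y - x) :=
    mul_nonneg (mul_nonneg (by linarith) ht) (by linarith)
  show _ / _ ≤ _ / _
  rw [div_le_div_iff₀ (hpos x hx) (hpos y hy)]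
  linarith
end
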